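/- Let K := ∫₀¹ ds/√(1 − s⁴), B_n := (2n+1)(π²/K²)·(−1)^{n+1} e^{−(n+1/2)π}/(1 + e^{−(2n+1)π}), and m_n := (2n+1)M for a fixed M > 0. Then the series S := Σ_{n≥0} B_n/m_n² converges absolutely and S ≠ 0. (Hence the gluon propagator G(0) = −S of the decoupling solution is finite and nonzero at zero momentum.) -/

import Mathlib

/-!
Multiplying numerator and denominator of `B_n` by `e^{(n+1/2)π}` turns the exponentials into
`1 / (2 cosh ((2n+1)π/2))`, so that
`S = -(π² / (2K²M²)) · Σ (-1)ⁿ / ((2n+1) cosh ((2n+1)π/2))`.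
The function `x ↦ 1 / (x cosh (tx))` is strictly decreasing on the positive half-line and, since
`|y| ≤ cosh y`, is at most `1 / (|t| x²)` there. The series therefore converges absolutely, and the
alternating sum lies above its second partial sum, which is positive. The prefactor is nonzero
because `K` is a convergent integral of a positive function.
-/

open Real

/-- The complete elliptic integral `K(i) = ∫₀¹ ds/√(1 − s⁴)`. -/
noncomputable def Kell : ℝ := ∫ s in (0:ℝ)..1, 1 / Real.sqrt (1 - s ^ 4)

/-- The residues `B_n = (2n+1)(π²/K²)(−1)^{n+1} e^{−(n+1/2)π}/(1 + e^{−(2n+1)π})`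
of the infrared gluon/scalar propagator. -/
noncomputable def Bcoef (n : ℕ) : ℝ :=
  (2 * (n : ℝ) + 1) * (π ^ 2 / Kell ^ 2) *
    ((-1) ^ (n + 1) * Real.exp (-(((n : ℝ) + 1 / 2)) * π)) / (1 + Real.exp (-(2 * (n : ℝ) + 1) * π))

/-- The complete elliptic integral of the first kind in Legendre's form, as a function of the
parameter `m = k²`, so that the imaginary modulus `k = i` is `m = -1`. -/
noncomputable def ellipticK (m : ℝ) : ℝ :=
  ∫ s in (0 : ℝ)..1, 1 / √((1 - s ^ 2) * (1 - m * s ^ 2))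

lemma one_sub_mul_sq_pos {m s : ℝ} (hm : m < 1) (hs : s ∈ Set.Icc 0 1) : 0 < 1 - m * s ^ 2 := by
  have hs_sq : s ^ 2 ≤ 1 := pow_le_one₀ hs.1 hs.2
  rcases le_total m 0 with hm_nonpos | hm_nonneg
  · linarith [mul_nonpos_of_nonpos_of_nonneg hm_nonpos (sq_nonneg s)]
  · linarith [mul_le_of_le_one_right hm_nonneg hs_sq]

/-- Only the factor `1 - s ^ 2` vanishes on `[0, 1]`, and `1 / √(1 - s ^ 2)` is integrable there as
the derivative of `arcsin`. -/
lemma intervalIntegrable_ellipticK {m : ℝ} (hm : m < 1) :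
    IntervalIntegrable (fun s : ℝ ↦ 1 / √((1 - s ^ 2) * (1 - m * s ^ 2)))
      MeasureTheory.volume 0 1 := by
  have hsingular : IntervalIntegrable (fun s : ℝ ↦ √(1 - s ^ 2)⁻¹) MeasureTheory.volume 0 1 :=
    Polynomial.Chebyshev.intervalIntegrable_sqrt_one_sub_sq_inv.mono_set <| by
      rw [Set.uIcc_of_le (by norm_num), Set.uIcc_of_le (by norm_num)]
      exact Set.Icc_subset_Icc_left (by norm_num)
  have hregular : ContinuousOn (fun s : ℝ ↦ (√(1 - m * s ^ 2))⁻¹) (Set.uIcc 0 1) := by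
    rw [Set.uIcc_of_le zero_le_one]
    exact ContinuousOn.inv₀ (by fun_prop) fun s hs ↦
      (Real.sqrt_pos.2 (one_sub_mul_sq_pos hm hs)).ne'
  refine (hsingular.mul_continuousOn hregular).congr fun s hs ↦ ?_
  rw [Set.uIoc_of_le zero_le_one] at hs
  simp only [one_div, sqrt_inv]
  rw [Real.sqrt_mul' _ (one_sub_mul_sq_pos hm (Set.Ioc_subset_Icc_self hs)).le, mul_inv]

lemma ellipticK_pos {m : ℝ} (hm : m < 1) : 0 < ellipticK m := by
  refine intervalIntegral.intervalIntegral_pos_of_pos_on (intervalIntegrable_ellipticK hm)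
    (fun s hs ↦ ?_) one_pos
  have hs_sq : s ^ 2 < 1 := pow_lt_one₀ hs.1.le hs.2 two_ne_zero
  exact one_div_pos.2 <| Real.sqrt_pos.2 <|
    mul_pos (sub_pos.2 hs_sq) (one_sub_mul_sq_pos hm (Set.Ioo_subset_Icc_self hs))

lemma Kell_eq_ellipticK : Kell = ellipticK (-1) := by
  unfold Kell ellipticK
  congr! 4
  ring

lemma Kell_pos : 0 < Kell :=
  Kell_eq_ellipticK ▸ ellipticK_pos (by norm_num)

lemma pos_of_tendsto_alternating_series {E : Type*} [Ring E] [PartialOrder E] [IsOrderedRing E]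
    [TopologicalSpace E] [OrderClosedTopology E] {l : E} {f : ℕ → E}
    (hfl : Filter.Tendsto (fun n ↦ ∑ i ∈ Finset.range n, (-1) ^ i * f i) Filter.atTop (nhds l))
    (hfa : Antitone f) (hf : f 1 < f 0) : 0 < l := calc
  0 < f 0 - f 1 := sub_pos.2 hf
  _ = ∑ i ∈ Finset.range (2 * 1), (-1) ^ i * f i := by simp [Finset.sum_range_succ, sub_eq_add_neg]
  _ ≤ l := hfa.alternating_series_le_tendsto hfl 1

lemma abs_le_cosh (x : ℝ) : |x| ≤ cosh x := calc
  |x| ≤ sinh |x| := self_le_sinh_iff.2 (abs_nonneg x)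
  _ ≤ cosh |x| := (sinh_lt_cosh _).le
  _ = cosh x := cosh_abs x

lemma exp_neg_div_one_add_exp_neg_two_mul (x : ℝ) :
    exp (-x) / (1 + exp (-(2 * x))) = 1 / (2 * cosh x) := by
  have hfactor : 1 + exp (-(2 * x)) = exp (-x) * (2 * cosh x) := by
    rw [cosh_eq, mul_div_cancel₀ _ two_ne_zero, mul_add, ← exp_add, ← exp_add]
    ring_nf
    rw [exp_zero, add_comm]
  rw [hfactor, div_mul_cancel_left₀ (exp_ne_zero _), one_div]

/-- The function `x ↦ sech (t x) / x`, whose values at the odd integers are, up to sign and a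
constant factor, the terms of the series for the propagator at zero momentum. -/
noncomputable def sechDiv (t x : ℝ) : ℝ := 1 / (x * cosh (t * x))

lemma sechDiv_strictAntiOn (t : ℝ) : StrictAntiOn (sechDiv t) (Set.Ioi 0) := by
  intro x (hx : 0 < x) y (hy : 0 < y) hxy
  have hcosh : cosh (t * x) ≤ cosh (t * y) := by
    rw [cosh_le_cosh, abs_mul, abs_mul, abs_of_pos hx, abs_of_pos hy]
    gcongr
  exact one_div_lt_one_div_of_lt (mul_pos hx (cosh_pos _))
    (mul_lt_mul hxy hcosh (cosh_pos _) hy.le)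

lemma sechDiv_odd_strictAnti (t : ℝ) : StrictAnti fun n : ℕ ↦ sechDiv t (2 * n + 1) :=
  fun m n hmn ↦ sechDiv_strictAntiOn t (Set.mem_Ioi.2 (by positivity))
    (Set.mem_Ioi.2 (by positivity)) (by gcongr)

lemma abs_sechDiv_le {t : ℝ} (ht : t ≠ 0) (x : ℝ) : |sechDiv t x| ≤ |t|⁻¹ * (x ^ 2)⁻¹ := by
  rcases eq_or_ne x 0 with rfl | hx
  · simp [sechDiv]
  have hdenom : |t| * x ^ 2 ≤ |x * cosh (t * x)| := calc
    |t| * x ^ 2 = |x| * |t * x| := by rw [abs_mul, ← sq_abs x]; ring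
    _ ≤ |x| * cosh (t * x) := by gcongr; exact abs_le_cosh _
    _ = |x * cosh (t * x)| := by rw [abs_mul, abs_of_pos (cosh_pos _)]
  rw [sechDiv, one_div, abs_inv, ← mul_inv]
  exact inv_anti₀ (by positivity) hdenom

lemma summable_sechDiv {t : ℝ} (ht : t ≠ 0) : Summable fun n : ℕ ↦ sechDiv t n :=
  .of_norm_bounded ((Real.summable_nat_pow_inv.2 one_lt_two).mul_left |t|⁻¹)
    fun n ↦ abs_sechDiv_le ht n

lemma summable_sechDiv_odd {t : ℝ} (ht : t ≠ 0) :
    Summable fun n : ℕ ↦ sechDiv t (2 * n + 1) := by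
  have hinj : Function.Injective fun n : ℕ ↦ 2 * n + 1 := fun m n hmn ↦ by grind
  simpa [Function.comp_def] using (summable_sechDiv ht).comp_injective hinj

lemma tsum_alternating_sechDiv_odd_pos {t : ℝ} (ht : t ≠ 0) :
    0 < ∑' n : ℕ, (-1) ^ n * sechDiv t (2 * n + 1) :=
  pos_of_tendsto_alternating_series (summable_sechDiv_odd ht).tendsto_alternating_series_tsum
    (sechDiv_odd_strictAnti t).antitone (sechDiv_odd_strictAnti t one_pos)

lemma Bcoef_eq (n : ℕ) :
    Bcoef n = -(π ^ 2 / (2 * Kell ^ 2)) *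
      ((-1) ^ n * ((2 * n + 1) / cosh (π / 2 * (2 * n + 1)))) := by
  have hsech := exp_neg_div_one_add_exp_neg_two_mul (π / 2 * (2 * n + 1))
  have hnum : -((n : ℝ) + 1 / 2) * π = -(π / 2 * (2 * n + 1)) := by ring
  have hden : -(2 * (n : ℝ) + 1) * π = -(2 * (π / 2 * (2 * n + 1))) := by ring
  rw [Bcoef, hnum, hden, mul_div_assoc, mul_div_assoc, hsech, pow_succ]
  ring

lemma Bcoef_div_sq (M : ℝ) (n : ℕ) :
    Bcoef n / ((2 * (n : ℝ) + 1) * M) ^ 2 =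
      -(π ^ 2 / (2 * Kell ^ 2 * M ^ 2)) * ((-1) ^ n * sechDiv (π / 2) (2 * n + 1)) := by
  rw [Bcoef_eq, sechDiv]
  field_simp

/-- With masses `m_n = (2n+1)M`, `M > 0`, the series `S = Σ B_n/m_n²` converges
absolutely and `S ≠ 0`; hence the gluon propagator `G(0) = −S` of the decoupling
solution is finite and nonzero at zero momentum. -/
theorem stmt_9 (M : ℝ) (hM : 0 < M) :
    Summable (fun n : ℕ => |Bcoef n / ((2 * (n : ℝ) + 1) * M) ^ 2|) ∧
    (∑' n : ℕ, Bcoef n / ((2 * (n : ℝ) + 1) * M) ^ 2) ≠ 0 := by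
  have hodd_pos : 0 < ∑' n : ℕ, (-1) ^ n * sechDiv (π / 2) (2 * n + 1) :=
    tsum_alternating_sechDiv_odd_pos (by positivity)
  have hprefactor : -(π ^ 2 / (2 * Kell ^ 2 * M ^ 2)) ≠ 0 := by
    have := Kell_pos
    exact neg_ne_zero.2 (by positivity)
  simp only [Bcoef_div_sq]
  constructor
  · exact ((summable_sechDiv_odd (by positivity)).alternating.mul_left _).abs
  · rw [tsum_mul_left]
    exact mul_ne_zero hprefactor hodd_pos.ne'
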